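/- Suppose the graph sequence {𝔾(t)} of the column stochastic matrix sequence {W(t)} is uniformly strongly connected. Let y(t+1) = W(t) y(t), y(0) = 𝟙, and S(t)_{ij} = W(t)_{ij} y_j(t) / y_i(t+1). Then the sequence of stochastic vectors π(t) := y(t)/n is an absolute probability sequence for {S(t)}, i.e., each π(t) has nonnegative entries summing to one and π(t)ᵀ = π(t+1)ᵀ S(t) for all t ≥ 0 (equivalently, y_j(t)/n = Σ_{i=1}^n (y_i(t+1)/n) S(t)_{ij} for all j, t); moreover it is the unique such sequence: any sequence {q(t)} of stochastic vectors satisfying q(t)ᵀ = q(t+1)ᵀ S(t) for all t ≥ 0 equals {y(t)/n}. -/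

import Mathlib

open Filter Finset
open scoped InnerProductSpace

/-!
Let `P` be the product of `K = n L` consecutive weight matrices, from time `t` on. Uniform strong
connectivity makes every entry of `P` positive, hence at least `β ^ K`. The matrices `S t` are the
conjugates `diag (y (t + 1))⁻¹ * W t * diag (y t)`, so their products telescope and the product `T`
of `S t, …, S (t + K - 1)` has entries `P i j * y t j / y (t + K) i ≥ β ^ K * π t j`. This Doeblin
minorization makes `z ↦ z ᵥ* T` contract the `ℓ¹` norm by `1 - β ^ K` on vectors of zero sum. The
difference of two absolute probability sequences at time `t` is the image of the difference at
time `t + m K` under `m` such contractions, so it vanishes on letting `m → ∞`.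
-/

section

open scoped Matrix Topology

section BackwardProduct

/-- The backward product `A (t + k - 1) * ⋯ * A (t + 1) * A t` of `k` consecutive terms of a
sequence, the later terms standing on the left; for weight matrices it transports the state at
time `t` to time `t + k`. -/
def backwardProd {M : Type*} [Monoid M] (A : ℕ → M) (t : ℕ) : ℕ → M
  | 0 => 1
  | k + 1 => A (t + k) * backwardProd A t k

theorem backwardProd_mem {M : Type*} [Monoid M] {A : ℕ → M} (N : Submonoid M)
    (hA : ∀ t, A t ∈ N) (t k : ℕ) : backwardProd A t k ∈ N := by
  induction k with
  | zero => exact N.one_mem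
  | succ k ih => exact N.mul_mem (hA _) ih

theorem eq_vecMul_backwardProd {ι R : Type*} [Fintype ι] [DecidableEq ι] [Semiring R]
    {A : ℕ → Matrix ι ι R} {z : ℕ → ι → R} (hz : ∀ t, z t = z (t + 1) ᵥ* A t) (t k : ℕ) :
    z t = z (t + k) ᵥ* backwardProd A t k := by
  induction k with
  | zero => simp [backwardProd]
  | succ k ih => rw [backwardProd, ← Matrix.vecMul_vecMul, ← add_assoc, ← hz, ← ih]

end BackwardProduct

section Positivity

variable {R : Type*} [Semiring R] [LinearOrder R] [IsStrictOrderedRing R]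
  {ι κ μ : Type*} [Fintype κ]

theorem mul_apply_pos_iff {A : Matrix ι κ R} {B : Matrix κ μ R} (hA : ∀ i j, 0 ≤ A i j)
    (hB : ∀ i j, 0 ≤ B i j) {i : ι} {j : μ} : 0 < (A * B) i j ↔ ∃ l, 0 < A i l ∧ 0 < B l j := by
  rw [Matrix.mul_apply, sum_pos_iff_of_nonneg fun l _ => mul_nonneg (hA i l) (hB l j)]
  simp only [mem_univ, true_and]
  refine exists_congr fun l => ⟨fun h => ?_, fun h => mul_pos h.1 h.2⟩
  exact ⟨pos_of_mul_pos_left h (hB l j), pos_of_mul_pos_right h (hA i l)⟩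

theorem le_mul_apply_of_pos {A : Matrix ι κ R} {B : Matrix κ μ R} {a b : R}
    (hb : 0 ≤ b) (hA : ∀ i j, 0 ≤ A i j) (hB : ∀ i j, 0 ≤ B i j)
    (hAa : ∀ i j, 0 < A i j → a ≤ A i j) (hBb : ∀ i j, 0 < B i j → b ≤ B i j)
    {i : ι} {j : μ} (hAB : 0 < (A * B) i j) :
    a * b ≤ (A * B) i j := by
  obtain ⟨l, hAl, hBl⟩ := (mul_apply_pos_iff hA hB).1 hAB
  calc a * b ≤ A i l * B l j := mul_le_mul (hAa i l hAl) (hBb l j hBl) hb hAl.le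
    _ ≤ ∑ l, A i l * B l j :=
      single_le_sum (f := fun l => A i l * B l j) (fun l _ => mul_nonneg (hA i l) (hB l j))
        (mem_univ l)

variable [Fintype ι] [DecidableEq ι] {W : ℕ → Matrix ι ι R}

theorem backwardProd_nonneg (hW : ∀ t i j, 0 ≤ W t i j) (t k : ℕ) (i j : ι) :
    0 ≤ backwardProd W t k i j := by
  induction k generalizing i with
  | zero => exact Matrix.zero_le_one_elem i j
  | succ k ih => exact sum_nonneg fun l _ => mul_nonneg (hW _ i l) (ih l)

theorem pow_le_backwardProd_of_pos (hW : ∀ t i j, 0 ≤ W t i j) {β : R} (hβ : 0 ≤ β)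
    (hWβ : ∀ t i j, 0 < W t i j → β ≤ W t i j) (t k : ℕ) (i j : ι)
    (hpos : 0 < backwardProd W t k i j) : β ^ k ≤ backwardProd W t k i j := by
  induction k generalizing i j with
  | zero =>
    obtain rfl : i = j := by
      by_contra hij
      simp [backwardProd, Matrix.one_apply_ne hij] at hpos
    simp [backwardProd]
  | succ k ih =>
    rw [pow_succ']
    exact le_mul_apply_of_pos (pow_nonneg hβ k) (hW _) (backwardProd_nonneg hW t k) (hWβ _) ih hpos

theorem backwardProd_succ_pos (hW : ∀ t i j, 0 ≤ W t i j) {t k : ℕ} {i l j : ι}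
    (hil : 0 < W (t + k) i l) (hlj : 0 < backwardProd W t k l j) :
    0 < backwardProd W t (k + 1) i j :=
  (mul_apply_pos_iff (hW _) (backwardProd_nonneg hW t k)).2 ⟨l, hil, hlj⟩

theorem backwardProd_pos_of_le (hW : ∀ t i j, 0 ≤ W t i j) (hdiag : ∀ t i, 0 < W t i i)
    {t k m : ℕ} (hkm : k ≤ m) {i j : ι} (hpos : 0 < backwardProd W t k i j) :
    0 < backwardProd W t m i j := by
  induction m, hkm using Nat.le_induction with
  | base => exact hpos
  | succ m _ ih => exact backwardProd_succ_pos hW (hdiag _ i) ih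

end Positivity

section Connectivity

/-- The graphs of the matrices `W t`, with an arc from `u` to `v` when `W t v u > 0`, are
uniformly strongly connected with window length `L`: the union of the graphs at times
`t, …, t + L - 1` is strongly connected for every `t`. -/
def UniformlyStronglyConnected {ι R : Type*} [Zero R] [LT R] (W : ℕ → Matrix ι ι R) (L : ℕ) :
    Prop :=
  ∀ t i j, Relation.TransGen (fun u v => ∃ k ∈ Ico t (t + L), 0 < W k v u) i j

theorem apply_card_eq_univ_of_monotone {α : Type*} [Fintype α] {f : ℕ → Finset α}
    (hf : Monotone f) (hstable : ∀ m, f m = f (m + 1) → f m = univ) :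
    f (Fintype.card α) = univ := by
  have hsucc {m : ℕ} (hm : #(f m) = #(f (m + 1))) : f m = f (m + 1) :=
    eq_of_subset_of_card_le (hf m.le_succ) hm.ge
  have hcard : #(f (Fintype.card α + 1)) = #(f (Fintype.card α)) := by
    refine Nat.stabilises_of_monotone (f := fun m => #(f m)) (fun _ _ h => card_le_card (hf h))
      (fun m => card_le_univ (f m)) (fun m hm => ?_) (Nat.le_succ _)
    have huniv : f (m + 1) = univ := hsucc hm ▸ hstable m (hsucc hm)
    exact card_le_card (hf (m + 1).le_succ) |>.antisymm (huniv ▸ card_le_univ _)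
  exact hstable _ (hsucc hcard.symm)

variable {ι R : Type*} [Fintype ι] [DecidableEq ι] [Semiring R] [LinearOrder R]
  [IsStrictOrderedRing R] {W : ℕ → Matrix ι ι R} {L : ℕ}

theorem UniformlyStronglyConnected.backwardProd_pos_of_stable (hW : ∀ t i j, 0 ≤ W t i j)
    (hdiag : ∀ t i, 0 < W t i i) (hconn : UniformlyStronglyConnected W L) {t k : ℕ} {j : ι}
    (hstable : ∀ i, 0 < backwardProd W t (k + L) i j → 0 < backwardProd W t k i j) (i : ι) :
    0 < backwardProd W t k i j := by
  have hstart : 0 < backwardProd W t k j j :=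
    backwardProd_pos_of_le hW hdiag k.zero_le (by simp [backwardProd])
  have hclosed {u v : ι} (huv : ∃ s ∈ Ico (t + k) (t + k + L), 0 < W s v u)
      (hu : 0 < backwardProd W t k u j) : 0 < backwardProd W t k v j := by
    obtain ⟨s, hs, hvu⟩ := huv
    rw [mem_Ico] at hs
    obtain ⟨r, rfl⟩ : ∃ r, s = t + r := Nat.exists_eq_add_of_le (by lia)
    have hur : 0 < backwardProd W t r u j := backwardProd_pos_of_le hW hdiag (by lia) hu
    exact hstable v
      (backwardProd_pos_of_le hW hdiag (by lia) (backwardProd_succ_pos hW hvu hur))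
  induction hconn (t + k) j i with
  | single hji => exact hclosed hji hstart
  | tail _ huv ih => exact hclosed huv ih

theorem UniformlyStronglyConnected.backwardProd_pos (hW : ∀ t i j, 0 ≤ W t i j)
    (hdiag : ∀ t i, 0 < W t i i) (hconn : UniformlyStronglyConnected W L) (t : ℕ) (i j : ι) :
    0 < backwardProd W t (Fintype.card ι * L) i j := by
  let reached (m : ℕ) : Finset ι := {i | 0 < backwardProd W t (m * L) i j}
  have hmono : Monotone reached := fun k m hkm =>
    monotone_filter_right _ fun _ _ => backwardProd_pos_of_le hW hdiag (Nat.mul_le_mul_right L hkm)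
  have hstable (m : ℕ) (hm : reached m = reached (m + 1)) : reached m = univ :=
    filter_true_of_mem fun i _ => hconn.backwardProd_pos_of_stable hW hdiag
      (fun v hv => by simpa [reached, add_one_mul, hv] using Finset.ext_iff.1 hm v) i
  have hi : i ∈ reached (Fintype.card ι) :=
    apply_card_eq_univ_of_monotone hmono hstable ▸ mem_univ i
  exact (mem_filter.1 hi).2

end Connectivity

section Contraction

theorem sum_abs_vecMul_le {ι κ : Type*} [Fintype ι] [Fintype κ] {A : Matrix ι κ ℝ} {ν : κ → ℝ}
    {δ : ℝ} (hA : ∀ i, ∑ j, A i j = 1) (hν : ∑ j, ν j = 1) (hmin : ∀ i j, δ * ν j ≤ A i j)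
    {z : ι → ℝ} (hz : ∑ i, z i = 0) :
    ∑ j, |(z ᵥ* A) j| ≤ (1 - δ) * ∑ i, |z i| := by
  have hcentered (j : κ) : (z ᵥ* A) j = ∑ i, z i * (A i j - δ * ν j) := by
    simp only [mul_sub, sum_sub_distrib, ← sum_mul, hz, zero_mul, sub_zero]
    rfl
  have hrow (i : ι) : ∑ j, (A i j - δ * ν j) = 1 - δ := by
    rw [sum_sub_distrib, hA, ← mul_sum, hν, mul_one]
  calc ∑ j, |(z ᵥ* A) j| ≤ ∑ j, ∑ i, |z i| * (A i j - δ * ν j) := by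
        refine sum_le_sum fun j _ => ?_
        rw [hcentered]
        refine (abs_sum_le_sum_abs _ _).trans_eq (sum_congr rfl fun i _ => ?_)
        rw [abs_mul, abs_of_nonneg (sub_nonneg.2 (hmin i j))]
    _ = (1 - δ) * ∑ i, |z i| := by
        rw [sum_comm]
        simp only [← mul_sum, hrow, ← sum_mul]
        exact mul_comm _ _

variable {ι : Type*} [Fintype ι] [DecidableEq ι] {A : ℕ → Matrix ι ι ℝ} {δ : ℝ} {K : ℕ}

/-- The Doeblin condition for a sequence of matrices: each backward product of `K` consecutive
terms dominates `δ` times a matrix all of whose rows equal one vector of sum `1`. -/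
def DoeblinCondition (A : ℕ → Matrix ι ι ℝ) (K : ℕ) (δ : ℝ) : Prop :=
  ∀ t, ∃ ν : ι → ℝ, ∑ j, ν j = 1 ∧ ∀ i j, δ * ν j ≤ backwardProd A t K i j

theorem DoeblinCondition.eq_zero (hA : ∀ t, A t ∈ Matrix.rowStochastic ℝ ι) (hδ : 0 < δ)
    (hdoeblin : DoeblinCondition A K δ) {z : ℕ → ι → ℝ} (hz : ∀ t, z t = z (t + 1) ᵥ* A t)
    (hsum : ∀ t, ∑ i, z t i = 0) {C : ℝ} (hC : ∀ t, ∑ i, |z t i| ≤ C) : z = 0 := by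
  have hrow (t : ℕ) := Matrix.sum_row_of_mem_rowStochastic (backwardProd_mem _ hA t K)
  funext t i
  have hδ_le : δ ≤ 1 := by
    obtain ⟨ν, hν, hmin⟩ := hdoeblin t
    calc δ = ∑ j, δ * ν j := by rw [← mul_sum, hν, mul_one]
      _ ≤ ∑ j, backwardProd A t K i j := sum_le_sum fun j _ => hmin i j
      _ = 1 := hrow t i
  have hdecay (m : ℕ) : ∀ t, ∑ i, |z t i| ≤ (1 - δ) ^ m * C := by
    induction m with
    | zero => simpa using hC
    | succ m ih =>
      intro t
      obtain ⟨ν, hν, hmin⟩ := hdoeblin t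
      calc ∑ i, |z t i| ≤ (1 - δ) * ∑ i, |z (t + K) i| := by
            conv_lhs => rw [eq_vecMul_backwardProd hz t K]
            exact sum_abs_vecMul_le (hrow t) hν hmin (hsum _)
        _ ≤ (1 - δ) * ((1 - δ) ^ m * C) :=
            mul_le_mul_of_nonneg_left (ih _) (sub_nonneg.2 hδ_le)
        _ = (1 - δ) ^ (m + 1) * C := by ring
  have hlim : Tendsto (fun m => (1 - δ) ^ m * C) atTop (𝓝 0) := by
    simpa using (tendsto_pow_atTop_nhds_zero_of_lt_one (sub_nonneg.2 hδ_le)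
      (sub_lt_self 1 hδ)).mul_const C
  have hnorm : ∑ i, |z t i| ≤ 0 := ge_of_tendsto' hlim fun m => hdecay m t
  exact abs_nonpos_iff.1 ((single_le_sum (f := fun i => |z t i|) (fun _ _ => abs_nonneg _)
    (mem_univ i)).trans hnorm)

/-- `π` is an absolute probability sequence for `S`: a sequence of stochastic vectors with
`π(t)ᵀ = π(t+1)ᵀ S(t)`. -/
structure IsAbsoluteProbabilitySeq (S : ℕ → Matrix ι ι ℝ) (π : ℕ → ι → ℝ) : Prop where
  mem_stdSimplex : ∀ t, π t ∈ stdSimplex ℝ ι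
  eq_vecMul : ∀ t, π t = π (t + 1) ᵥ* S t

theorem IsAbsoluteProbabilitySeq.eq_of_doeblinCondition {p q : ℕ → ι → ℝ}
    (hp : IsAbsoluteProbabilitySeq A p) (hq : IsAbsoluteProbabilitySeq A q)
    (hA : ∀ t, A t ∈ Matrix.rowStochastic ℝ ι) (hδ : 0 < δ) (hdoeblin : DoeblinCondition A K δ) :
    p = q := by
  refine sub_eq_zero.1 (hdoeblin.eq_zero hA hδ (fun t => ?_) (fun t => ?_) (C := 2) fun t => ?_)
  · simp only [Pi.sub_apply, Matrix.sub_vecMul, ← hp.eq_vecMul, ← hq.eq_vecMul]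
  · simp [(hp.mem_stdSimplex t).2, (hq.mem_stdSimplex t).2]
  · calc ∑ i, |(p - q) t i| ≤ ∑ i, (p t i + q t i) := by
          refine sum_le_sum fun i _ => (abs_sub _ _).trans_eq ?_
          rw [abs_of_nonneg ((hp.mem_stdSimplex t).1 i), abs_of_nonneg ((hq.mem_stdSimplex t).1 i)]
      _ = 2 := by
          rw [sum_add_distrib, (hp.mem_stdSimplex t).2, (hq.mem_stdSimplex t).2, one_add_one_eq_two]

end Contraction

section PushSum

variable {ι : Type*} [Fintype ι] {W : ℕ → Matrix ι ι ℝ} {y : ℕ → ι → ℝ}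

/-- The matrix `diag (y (t + 1))⁻¹ * W t * diag (y t)` that drives the ratios of the push-sum
algorithm with weights `W` and scaling variables `y`. -/
noncomputable def pushSumMatrix (W : ℕ → Matrix ι ι ℝ) (y : ℕ → ι → ℝ) (t : ℕ) : Matrix ι ι ℝ :=
  Matrix.of fun i j => W t i j * y t j / y (t + 1) i

theorem pos_of_mulVec_recurrence (hW : ∀ t i j, 0 ≤ W t i j) (hdiag : ∀ t i, 0 < W t i i)
    (hy0 : ∀ i, 0 < y 0 i) (hy : ∀ t, y (t + 1) = W t *ᵥ y t) (t : ℕ) (i : ι) : 0 < y t i := by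
  induction t generalizing i with
  | zero => exact hy0 i
  | succ t ih =>
    rw [hy]
    exact sum_pos' (fun j _ => mul_nonneg (hW t i j) (ih j).le)
      ⟨i, mem_univ i, mul_pos (hdiag t i) (ih i)⟩

variable [DecidableEq ι]

theorem sum_eq_of_mulVec_recurrence (hW : ∀ t, W t ∈ Matrix.colStochastic ℝ ι)
    (hy : ∀ t, y (t + 1) = W t *ᵥ y t) (t : ℕ) : ∑ i, y t i = ∑ i, y 0 i := by
  induction t with
  | zero => rfl
  | succ t ih => rw [hy, Matrix.sum_mulVec_of_mem_colStochastic (hW t), ih]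

theorem pushSumMatrix_mem_rowStochastic (hW : ∀ t i j, 0 ≤ W t i j) (hpos : ∀ t i, 0 < y t i)
    (hy : ∀ t, y (t + 1) = W t *ᵥ y t) (t : ℕ) :
    pushSumMatrix W y t ∈ Matrix.rowStochastic ℝ ι := by
  refine Matrix.mem_rowStochastic_iff_sum.2 ⟨fun i j => ?_, fun i => ?_⟩
  · exact div_nonneg (mul_nonneg (hW t i j) (hpos t j).le) (hpos (t + 1) i).le
  · calc ∑ j, W t i j * y t j / y (t + 1) i = (W t *ᵥ y t) i / y (t + 1) i := (sum_div ..).symm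
      _ = 1 := by rw [← hy, div_self (hpos _ i).ne']

theorem isAbsoluteProbabilitySeq_pushSumMatrix [Nonempty ι]
    (hW : ∀ t, W t ∈ Matrix.colStochastic ℝ ι) (hpos : ∀ t i, 0 < y t i)
    (hy : ∀ t, y (t + 1) = W t *ᵥ y t) :
    IsAbsoluteProbabilitySeq (pushSumMatrix W y) fun t i => y t i / ∑ l, y 0 l := by
  have hmass : 0 < ∑ l, y 0 l := sum_pos (fun l _ => hpos 0 l) univ_nonempty
  refine ⟨fun t => ⟨fun i => div_nonneg (hpos t i).le hmass.le, ?_⟩, fun t => funext fun j => ?_⟩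
  · rw [← sum_div, sum_eq_of_mulVec_recurrence hW hy, div_self hmass.ne']
  · symm
    calc ∑ i, y (t + 1) i / (∑ l, y 0 l) * (W t i j * y t j / y (t + 1) i)
        = ∑ i, W t i j * (y t j / ∑ l, y 0 l) := sum_congr rfl fun i _ => by
          have := (hpos (t + 1) i).ne'
          field_simp
      _ = y t j / ∑ l, y 0 l := by
          rw [← sum_mul, Matrix.sum_col_of_mem_colStochastic (hW t), one_mul]

theorem backwardProd_pushSumMatrix_apply (hy : ∀ t i, y t i ≠ 0) (t k : ℕ) (i j : ι) :
    backwardProd (pushSumMatrix W y) t k i j = backwardProd W t k i j * y t j / y (t + k) i := by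
  induction k generalizing i with
  | zero =>
    by_cases hij : i = j
    · simp [backwardProd, hij, hy]
    · simp [backwardProd, hij]
  | succ k ih =>
    simp only [backwardProd, Matrix.mul_apply, ih, sum_mul, sum_div]
    refine sum_congr rfl fun l _ => ?_
    have := hy (t + k) l
    simp only [pushSumMatrix, Matrix.of_apply, add_assoc]
    field_simp

theorem mul_div_sum_le_backwardProd_pushSumMatrix (hpos : ∀ t i, 0 < y t i) {δ : ℝ}
    (hδ : 0 ≤ δ) {t k : ℕ} {i j : ι} (hle : δ ≤ backwardProd W t k i j) :
    δ * (y t j / ∑ l, y (t + k) l) ≤ backwardProd (pushSumMatrix W y) t k i j := by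
  rw [backwardProd_pushSumMatrix_apply fun t i => (hpos t i).ne', ← mul_div_assoc]
  have hy_le : y (t + k) i ≤ ∑ l, y (t + k) l :=
    single_le_sum (fun l _ => (hpos (t + k) l).le) (mem_univ i)
  have := hpos (t + k) i
  have hyj := (hpos t j).le
  have := mul_nonneg (hδ.trans hle) hyj
  gcongr

theorem doeblinCondition_pushSumMatrix [Nonempty ι] (hW : ∀ t, W t ∈ Matrix.colStochastic ℝ ι)
    (hpos : ∀ t i, 0 < y t i) (hy : ∀ t, y (t + 1) = W t *ᵥ y t) {δ : ℝ} (hδ : 0 ≤ δ) {K : ℕ}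
    (hle : ∀ t i j, δ ≤ backwardProd W t K i j) : DoeblinCondition (pushSumMatrix W y) K δ := by
  refine fun t => ⟨fun j => y t j / ∑ l, y (t + K) l, ?_, fun i j =>
    mul_div_sum_le_backwardProd_pushSumMatrix hpos hδ (hle t i j)⟩
  rw [← sum_div, sum_eq_of_mulVec_recurrence hW hy t, sum_eq_of_mulVec_recurrence hW hy (t + K)]
  exact div_self (sum_pos (fun l _ => hpos 0 l) univ_nonempty).ne'

theorem stmt_17_general [Nonempty ι] (hW : ∀ t, W t ∈ Matrix.colStochastic ℝ ι)
    (hdiag : ∀ t i, 0 < W t i i) {β : ℝ} (hβ : 0 < β) (hWβ : ∀ t i j, 0 < W t i j → β ≤ W t i j)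
    {L : ℕ} (hconn : UniformlyStronglyConnected W L) (hy0 : ∀ i, 0 < y 0 i)
    (hy : ∀ t, y (t + 1) = W t *ᵥ y t) (q : ℕ → ι → ℝ) :
    IsAbsoluteProbabilitySeq (pushSumMatrix W y) q ↔ q = fun t i => y t i / ∑ l, y 0 l := by
  have hnonneg (t : ℕ) (i j : ι) : 0 ≤ W t i j := Matrix.nonneg_of_mem_colStochastic (hW t)
  have hpos := pos_of_mulVec_recurrence hnonneg hdiag hy0 hy
  have hy_seq := isAbsoluteProbabilitySeq_pushSumMatrix hW hpos hy
  refine ⟨fun hq => ?_, fun hq => hq ▸ hy_seq⟩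
  have hlower (t : ℕ) (i j : ι) :
      β ^ (Fintype.card ι * L) ≤ backwardProd W t (Fintype.card ι * L) i j :=
    pow_le_backwardProd_of_pos hnonneg hβ.le hWβ t _ i j
      (hconn.backwardProd_pos hnonneg hdiag t i j)
  exact hq.eq_of_doeblinCondition hy_seq (pushSumMatrix_mem_rowStochastic hnonneg hpos hy)
    (pow_pos hβ _) (doeblinCondition_pushSumMatrix hW hpos hy (pow_nonneg hβ.le _) hlower)

end PushSum

end

theorem stmt_17
    (n : ℕ) (hn : 0 < n)
    (W : ℕ → Matrix (Fin n) (Fin n) ℝ)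
    (hWnonneg : ∀ t i j, 0 ≤ W t i j)
    (hWcol : ∀ t j, ∑ i, W t i j = 1)
    (hWdiag : ∀ t i, 0 < W t i i)
    (β : ℝ) (hβ : 0 < β)
    (hWβ : ∀ t i j, 0 < W t i j → β ≤ W t i j)
    (L : ℕ) (hL : 0 < L)
    (hUSC : ∀ t : ℕ, ∀ i j : Fin n,
      Relation.TransGen (fun u v : Fin n => ∃ k ∈ Finset.Ico t (t + L), 0 < W k v u) i j)
    (y : ℕ → Fin n → ℝ)
    (hy0 : ∀ i, y 0 i = 1)
    (hyrec : ∀ t i, y (t + 1) i = ∑ j, W t i j * y t j)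
    (S : ℕ → Matrix (Fin n) (Fin n) ℝ)
    (hS : ∀ t i j, S t i j = W t i j * y t j / y (t + 1) i)
    :
    (∀ t, (∀ i, 0 ≤ y t i / n) ∧ ∑ i, y t i / n = 1) ∧
    (∀ t : ℕ, ∀ j : Fin n, y t j / n = ∑ i, y (t + 1) i / n * S t i j) ∧
    (∀ q : ℕ → Fin n → ℝ,
      (∀ t, (∀ i, 0 ≤ q t i) ∧ ∑ i, q t i = 1) →
      (∀ t : ℕ, ∀ j : Fin n, q t j = ∑ i, q (t + 1) i * S t i j) →
      ∀ t i, q t i = y t i / n) := by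
  have : Nonempty (Fin n) := ⟨⟨0, hn⟩⟩
  obtain rfl : S = pushSumMatrix W y := funext fun t => Matrix.ext (hS t)
  have hchar := stmt_17_general (fun t => Matrix.mem_colStochastic_iff_sum.2 ⟨hWnonneg t, hWcol t⟩)
    hWdiag hβ hWβ hUSC (by simp [hy0]) fun t => funext (hyrec t)
  simp only [hy0, sum_const, card_univ, Fintype.card_fin, nsmul_eq_mul, mul_one] at hchar
  have hy_seq := (hchar _).2 rfl
  refine ⟨hy_seq.mem_stdSimplex, fun t => congrFun (hy_seq.eq_vecMul t), fun q hq hqS t i => ?_⟩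
  exact congrFun₂ ((hchar q).1 ⟨hq, fun t => funext (hqS t)⟩) t i
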